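/- Let A ∈ ℝ^{I×J}, λ > 0, P*_λ = (A Aᵀ + λ I_I)⁻¹ A, F_λ(P) = ‖I_J − Pᵀ A‖_F² + λ‖P‖_F², and G_λ(P) = F_λ(P) − F_λ(P*_λ). For P ∈ ℝ^{I×J}, let [Pᵀ A]_S = (Pᵀ A + Aᵀ P)/2 denote the symmetric part of Pᵀ A. Denote by λ_1 ≥ … ≥ λ_J the eigenvalues in decreasing order of a J×J real symmetric matrix. Then for every P ∈ ℝ^{I×J}: ∑_{r=1}^J |λ_r([Pᵀ A]_S) − λ_r((P*_λ)ᵀ A)|² ≤ G_λ(P) − λ‖P − P*_λ‖_F². -/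

import Mathlib

open Matrix BigOperators

/-- Squared Frobenius norm of a real matrix. -/
noncomputable def frobSq {m n : Type*} [Fintype m] [Fintype n] (M : Matrix m n ℝ) : ℝ :=
  ∑ i, ∑ j, (M i j) ^ 2

/-- The regularized objective `F_λ(P) = ‖I_J − Pᵀ A‖_F² + λ‖P‖_F²`. -/
noncomputable def Fpinv {I J : ℕ} (A : Matrix (Fin I) (Fin J) ℝ) (lam : ℝ)
    (P : Matrix (Fin I) (Fin J) ℝ) : ℝ :=
  frobSq ((1 : Matrix (Fin J) (Fin J) ℝ) - Pᵀ * A) + lam * frobSq P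

/-- The regularized minimizer `P*_λ = (A Aᵀ + λ I_I)⁻¹ A`. -/
noncomputable def PstarId {I J : ℕ} (A : Matrix (Fin I) (Fin J) ℝ) (lam : ℝ) :
    Matrix (Fin I) (Fin J) ℝ :=
  (A * Aᵀ + lam • (1 : Matrix (Fin I) (Fin I) ℝ))⁻¹ * A

lemma frobSq_eq_trace {m n : Type*} [Fintype m] [Fintype n] (M : Matrix m n ℝ) :
    frobSq M = trace (Mᵀ * M) := by
  unfold frobSq
  rw [Finset.sum_comm]
  simp [trace, Matrix.mul_apply, pow_two]

lemma frobSq_add {m n : Type*} [Fintype m] [Fintype n] (M N : Matrix m n ℝ) :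
    frobSq (M + N) = frobSq M + 2 * trace (Nᵀ * M) + frobSq N := by
  have h : trace (Mᵀ * N) = trace (Nᵀ * M) := by
    rw [← trace_transpose, transpose_mul, transpose_transpose]
  simp only [frobSq_eq_trace, transpose_add, Matrix.add_mul, Matrix.mul_add, trace_add, h]
  ring

lemma frobSq_neg {m n : Type*} [Fintype m] [Fintype n] (M : Matrix m n ℝ) :
    frobSq (-M) = frobSq M := by
  simp [frobSq]

lemma frobSq_orth {n : Type*} [Fintype n] [DecidableEq n] (M U V : Matrix n n ℝ)
    (hU : U * Uᵀ = 1) (hV : V * Vᵀ = 1) : frobSq (Uᵀ * M * V) = frobSq M := by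
  rw [frobSq_eq_trace, frobSq_eq_trace]
  have : (Uᵀ * M * V)ᵀ * (Uᵀ * M * V) = Vᵀ * (Mᵀ * ((U * Uᵀ) * (M * V))) := by
    simp only [transpose_mul, transpose_transpose, Matrix.mul_assoc]
  rw [this, hU, Matrix.one_mul, trace_mul_comm, Matrix.mul_assoc, Matrix.mul_assoc, hV,
    Matrix.mul_one]

lemma eig_exists {n : ℕ} {S : Matrix (Fin n) (Fin n) ℝ} (hS : S.IsHermitian) (μ : Fin n → ℝ)
    (hμ : ∃ σ : Equiv.Perm (Fin n), ∀ r, μ r = hS.eigenvalues (σ r)) :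
    ∃ U : Matrix (Fin n) (Fin n) ℝ, U * Uᵀ = 1 ∧ Uᵀ * U = 1 ∧ S * U = U * diagonal μ := by
  obtain ⟨σ, hσ⟩ := hμ
  let E : Matrix (Fin n) (Fin n) ℝ := hS.eigenvectorUnitary
  have hE : E * Eᵀ = 1 := by
    have := Unitary.coe_mul_star_self hS.eigenvectorUnitary
    rwa [Unitary.coe_star, star_eq_conjTranspose, conjTranspose_eq_transpose_of_trivial] at this
  have h1 : E.submatrix id σ * (E.submatrix id σ)ᵀ = 1 := by
    rw [transpose_submatrix, submatrix_mul_equiv, hE]; simp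
  refine ⟨E.submatrix id σ, h1, mul_eq_one_comm.mp h1, ?_⟩
  ext i j
  have := congrFun (hS.mulVec_eigenvectorBasis (σ j)) i
  simp only [Matrix.mul_diagonal, hσ]
  simp only [mulVec, dotProduct, Pi.smul_apply, smul_eq_mul] at this
  rw [Matrix.mul_apply]
  rw [mul_comm]
  exact this

lemma perm_bound {n : ℕ} (μ ν : Fin n → ℝ) (hμ : Antitone μ) (hν : Antitone ν)
    (D : Matrix (Fin n) (Fin n) ℝ) (hD : D ∈ doublyStochastic ℝ (Fin n)) :
    ∑ r, (μ r - ν r) ^ 2 ≤ ∑ i, ∑ j, (μ i - ν j) ^ 2 * D i j := by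
  obtain ⟨w, hw0, hw1, rfl⟩ := exists_eq_sum_perm_of_mem_doublyStochastic hD
  have key : ∀ σ : Equiv.Perm (Fin n), ∑ r, (μ r - ν r) ^ 2 ≤ ∑ i, (μ i - ν (σ i)) ^ 2 := by
    intro σ
    have h1 := (hμ.monovary hν).sum_mul_comp_perm_le_sum_mul (σ := σ)
    have h2 : ∑ i, ν (σ i) ^ 2 = ∑ i, ν i ^ 2 := Equiv.sum_comp σ (fun i => ν i ^ 2)
    simp only [sub_sq, Finset.sum_add_distrib, Finset.sum_sub_distrib, mul_assoc,
      ← Finset.mul_sum, h2]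
    linarith
  have e : ∑ i, ∑ j, (μ i - ν j) ^ 2 * (∑ σ, w σ • σ.permMatrix ℝ) i j
      = ∑ σ, w σ * ∑ i, (μ i - ν (σ i)) ^ 2 := by
    simp only [Matrix.sum_apply, Matrix.smul_apply, smul_eq_mul, Finset.mul_sum]
    rw [Finset.sum_comm' (t' := Finset.univ) (s' := fun _ => Finset.univ) (by simp)]
    rw [Finset.sum_congr rfl (fun _ _ => Finset.sum_congr rfl (fun _ _ => rfl))]
    simp_rw [Finset.sum_comm (s := (Finset.univ : Finset (Fin n)))
      (t := (Finset.univ : Finset (Equiv.Perm (Fin n))))]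
    refine Finset.sum_congr rfl fun σ _ => ?_
    rw [Finset.sum_comm]
    refine Finset.sum_congr rfl fun i _ => ?_
    rw [Finset.sum_eq_single (σ i)]
    · simp [Equiv.Perm.permMatrix, PEquiv.toMatrix_apply, mul_comm]
    · intro b _ hb
      simp [Equiv.Perm.permMatrix, PEquiv.toMatrix_apply, hb.symm]
    · simp
  rw [e]
  calc ∑ r, (μ r - ν r) ^ 2 = ∑ σ, w σ * ∑ r, (μ r - ν r) ^ 2 := by
        rw [← Finset.sum_mul, hw1, one_mul]
    _ ≤ _ := Finset.sum_le_sum fun σ _ => mul_le_mul_of_nonneg_left (key σ) (hw0 σ)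

lemma orth_row {n : ℕ} (W : Matrix (Fin n) (Fin n) ℝ) (h : W * Wᵀ = 1) (i : Fin n) :
    ∑ j, W i j ^ 2 = 1 := by
  have := congrFun (congrFun h i) i
  simpa [Matrix.mul_apply, pow_two] using this

/-- Hoffman–Wielandt inequality. -/
lemma hoffman {n : ℕ} {S T : Matrix (Fin n) (Fin n) ℝ} (hS : S.IsHermitian)
    (hT : T.IsHermitian) (μ ν : Fin n → ℝ) (hμa : Antitone μ) (hνa : Antitone ν)
    (hμ : ∃ σ : Equiv.Perm (Fin n), ∀ r, μ r = hS.eigenvalues (σ r))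
    (hν : ∃ σ : Equiv.Perm (Fin n), ∀ r, ν r = hT.eigenvalues (σ r)) :
    ∑ r, (μ r - ν r) ^ 2 ≤ frobSq (S - T) := by
  obtain ⟨U, hU, hU', hSU⟩ := eig_exists hS μ hμ
  obtain ⟨V, hV, hV', hTV⟩ := eig_exists hT ν hν
  have hSU' : Uᵀ * S = diagonal μ * Uᵀ := by
    have := congrArg transpose hSU
    rw [transpose_mul, transpose_mul, diagonal_transpose] at this
    rwa [← conjTranspose_eq_transpose_of_trivial S, hS.eq] at this
  rw [← frobSq_orth (S - T) U V hU hV]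
  have e : Uᵀ * (S - T) * V = diagonal μ * (Uᵀ * V) - (Uᵀ * V) * diagonal ν := by
    rw [Matrix.mul_sub, Matrix.sub_mul, hSU', Matrix.mul_assoc, Matrix.mul_assoc, hTV,
      Matrix.mul_assoc]
  have hW : (Uᵀ * V) * (Uᵀ * V)ᵀ = 1 := by
    rw [transpose_mul, transpose_transpose, Matrix.mul_assoc, ← Matrix.mul_assoc V, hV,
      Matrix.one_mul, hU']
  have hW' := mul_eq_one_comm.mp hW
  rw [e]
  generalize Uᵀ * V = W at hW hW'
  have := perm_bound μ ν hμa hνa (Matrix.of fun i j => W i j ^ 2) (by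
    rw [mem_doublyStochastic_iff_sum]
    refine ⟨fun i j => sq_nonneg _, orth_row W hW, fun j => ?_⟩
    exact orth_row Wᵀ (by rw [transpose_transpose]; exact hW') j)
  refine this.trans (le_of_eq ?_)
  unfold frobSq
  refine Finset.sum_congr rfl fun i _ => Finset.sum_congr rfl fun j _ => ?_
  simp only [of_apply, Matrix.sub_apply, diagonal_mul, mul_diagonal]
  ring

lemma frobSq_sym_le {n : ℕ} (M : Matrix (Fin n) (Fin n) ℝ) :
    frobSq ((1 / 2 : ℝ) • (M + Mᵀ)) ≤ frobSq M := by
  have h : frobSq M = ∑ i, ∑ j, (M i j ^ 2 + M j i ^ 2) / 2 := by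
    have : frobSq M = ∑ i, ∑ j, M j i ^ 2 := by unfold frobSq; rw [Finset.sum_comm]
    simp only [← Finset.sum_div, Finset.sum_add_distrib, ← this]
    unfold frobSq
    ring
  rw [h]
  unfold frobSq
  refine Finset.sum_le_sum fun i _ => Finset.sum_le_sum fun j _ => ?_
  simp only [Matrix.smul_apply, Matrix.add_apply, transpose_apply, smul_eq_mul]
  nlinarith [sq_nonneg (M i j - M j i)]

lemma normal_eq {I J : ℕ} (A : Matrix (Fin I) (Fin J) ℝ) (lam : ℝ) (hlam : 0 < lam) :
    A * Aᵀ * PstarId A lam + lam • PstarId A lam = A := by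
  have hpd : (A * Aᵀ + lam • (1 : Matrix (Fin I) (Fin I) ℝ)).PosDef := by
    have h1 := Matrix.posSemidef_self_mul_conjTranspose A
    rw [conjTranspose_eq_transpose_of_trivial] at h1
    exact Matrix.PosDef.posSemidef_add h1 (Matrix.PosDef.one.smul hlam)
  have hu := (Matrix.isUnit_iff_isUnit_det _).mp hpd.isUnit
  have := Matrix.mul_nonsing_inv_cancel_left _ A hu
  rw [Matrix.add_mul, Matrix.smul_mul, Matrix.one_mul] at this
  exact this

lemma gap_eq {I J : ℕ} (A : Matrix (Fin I) (Fin J) ℝ) (lam : ℝ) (hlam : 0 < lam)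
    (P : Matrix (Fin I) (Fin J) ℝ) :
    (Fpinv A lam P - Fpinv A lam (PstarId A lam)) - lam * frobSq (P - PstarId A lam)
      = frobSq ((P - PstarId A lam)ᵀ * A) := by
  have hn := normal_eq A lam hlam
  generalize PstarId A lam = Q at hn
  obtain ⟨D, rfl⟩ : ∃ D, P = Q + D := ⟨P - Q, by simp⟩
  rw [add_sub_cancel_left]
  unfold Fpinv
  have e : (1 : Matrix (Fin J) (Fin J) ℝ) - (Q + D)ᵀ * A = (1 - Qᵀ * A) + -(Dᵀ * A) := by
    rw [transpose_add, Matrix.add_mul]; abel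
  have hc : trace ((Dᵀ * A)ᵀ * (1 - Qᵀ * A)) = lam * trace (Dᵀ * Q) := by
    rw [← trace_transpose, transpose_mul, transpose_transpose, trace_mul_comm,
      transpose_sub, transpose_mul, transpose_transpose, transpose_one, trace_mul_comm, trace_mul_comm,
      Matrix.mul_assoc, Matrix.mul_sub, Matrix.mul_one, ← Matrix.mul_assoc A]
    have : A - A * Aᵀ * Q = lam • Q := by rw [sub_eq_iff_eq_add, add_comm]; exact hn.symm
    rw [this, Matrix.mul_smul, trace_smul, smul_eq_mul]
  rw [e, frobSq_add, frobSq_add Q D, frobSq_neg, transpose_neg, Matrix.neg_mul, trace_neg, hc]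
  ring

/-- Eigenvalue perturbation bound: if `λ_1 ≥ … ≥ λ_J` are the decreasingly ordered
eigenvalues of the symmetric part `[Pᵀ A]_S = (Pᵀ A + Aᵀ P)/2` and of `(P*_λ)ᵀ A`
respectively, then `∑_r |λ_r([Pᵀ A]_S) − λ_r((P*_λ)ᵀ A)|² ≤ G_λ(P) − λ‖P − P*_λ‖_F²`,
where `G_λ(P) = F_λ(P) − F_λ(P*_λ)`. -/
theorem eigenvalue_perturbation_bound {I J : ℕ}
    (A : Matrix (Fin I) (Fin J) ℝ) (lam : ℝ) (hlam : 0 < lam)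
    (P : Matrix (Fin I) (Fin J) ℝ)
    (hS : ((1 / 2 : ℝ) • (Pᵀ * A + Aᵀ * P)).IsHermitian)
    (hT : ((PstarId A lam)ᵀ * A).IsHermitian)
    (μ ν : Fin J → ℝ) (hμa : Antitone μ) (hνa : Antitone ν)
    (hμ : ∃ σ : Equiv.Perm (Fin J), ∀ r, μ r = hS.eigenvalues (σ r))
    (hν : ∃ σ : Equiv.Perm (Fin J), ∀ r, ν r = hT.eigenvalues (σ r)) :
    ∑ r, |μ r - ν r| ^ 2 ≤
      (Fpinv A lam P - Fpinv A lam (PstarId A lam)) -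
        lam * frobSq (P - PstarId A lam) := by
  have h1 := hoffman hS hT μ ν hμa hνa hμ hν
  simp only [sq_abs]
  rw [gap_eq A lam hlam P]
  refine h1.trans (le_trans (le_of_eq ?_) (frobSq_sym_le _))
  have hT' : Aᵀ * PstarId A lam = (PstarId A lam)ᵀ * A := by
    have := hT.eq
    rwa [conjTranspose_eq_transpose_of_trivial, transpose_mul, transpose_transpose] at this
  congr 1
  rw [transpose_mul, transpose_transpose, transpose_sub, Matrix.sub_mul, Matrix.mul_sub, hT']
  ext i j
  simp only [Matrix.smul_apply, Matrix.add_apply, Matrix.sub_apply, smul_eq_mul]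
  ring
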